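/- Let N be a finite ground set and f : 2^N → ℝ a nonnegative submodular function. Let a_1, ..., a_s be distinct elements of N, let A = {a_1, ..., a_s}, and for each j let m_j = f({a_1, ..., a_j}) − f({a_1, ..., a_{j−1}}). Let A⁺ = {a_j : m_j ≥ 0} and A⁻ = {a_j : m_j < 0}. Let ε ≥ 0 and M a positive integer. Suppose we are given: sets P_1, ..., P_M ⊆ A; pairwise disjoint sets E_1, ..., E_M ⊆ N \ A; pairwise disjoint sets D_1, ..., D_M ⊆ A⁻; and sets F_1 ⊇ F_2 ⊇ ... ⊇ F_M contained in N \ A with f(u | P_i) ≥ 0 for all u ∈ F_i and all i; such that for every i ∈ {1, ..., M}: ε·Σ_{u∈F_i} f(u | P_i) ≤ Σ_{u∈E_i} (−f(u | P_i)) + Σ_{a_j∈D_i} (−m_j). Then ε·M·Σ_{u∈F_M} f(u | A) ≤ f(A⁺). -/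

import Mathlib

/-!
By submodularity `f(u | A) ≤ f(u | P)` for `P ⊆ A` and `u ∉ A` (`marginal_antitone`). As each `F i`
contains the last one and has nonnegative marginals, summing the hypothesis over `i` gives
`ε M ∑_{u ∈ F_M} f(u | A) ≤ ∑_{u ∈ E} (-f(u | A)) + ∑_{j ∈ D} (-m j)`, where `E` and `D` are the
disjoint unions of the `E i` and of the `D i`. The first sum is at most `f A - f (A ∪ E) ≤ f A`
(`union_sub_le_sum_marginal`), and the second is at most the sum of `-m j` over all negative
marginals. The `m j` telescope to `f A - f ∅` (`sum_prefix_marginal`), so the total is at most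
`f ∅ + ∑_{0 ≤ m j} m j`, which is at most `f A⁺`: the marginal of `a j` over the earlier elements of
`A⁺` is at least its marginal over all earlier elements (`add_sum_prefix_marginal_le`).
-/

section Submodular

variable {α : Type*} [DecidableEq α] {f : Finset α → ℝ}

/-- Diminishing returns. -/
lemma marginal_antitone
    (hf : ∀ X Y : Finset α, f (X ∪ Y) + f (X ∩ Y) ≤ f X + f Y)
    {X Y : Finset α} (hXY : X ⊆ Y) {u : α} (hu : u ∉ Y) :
    f (insert u Y) - f Y ≤ f (insert u X) - f X := by
  have h := hf (insert u X) Y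
  have h1 : insert u X ∪ Y = insert u Y := by
    rw [Finset.insert_union, Finset.union_eq_right.2 hXY]
  have h2 : insert u X ∩ Y = X := by
    rw [Finset.insert_inter_of_notMem hu, Finset.inter_eq_left.2 hXY]
  rw [h1, h2] at h
  linarith

lemma union_sub_le_sum_marginal
    (hf : ∀ X Y : Finset α, f (X ∪ Y) + f (X ∩ Y) ≤ f X + f Y)
    (A E : Finset α) (hE : Disjoint E A) :
    f (A ∪ E) - f A ≤ ∑ u ∈ E, (f (insert u A) - f A) := by
  induction E using Finset.induction_on with
  | empty => simp
  | insert u E hu ih =>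
    rw [Finset.disjoint_insert_left] at hE
    have h1 := marginal_antitone hf (Finset.subset_union_left (s₁ := A) (s₂ := E))
      (u := u) (by simp [hu, hE.1])
    have h2 := ih hE.2
    rw [Finset.sum_insert hu, Finset.union_insert]
    linarith

lemma sum_prefix_marginal (f : Finset α → ℝ) {s : ℕ} (a : Fin s → α) :
    ∑ j : Fin s, (f ((Finset.univ.filter (fun i : Fin s => i ≤ j)).image a) -
      f ((Finset.univ.filter (fun i : Fin s => i < j)).image a)) =
      f (Finset.univ.image a) - f ∅ := by
  let G : ℕ → ℝ := fun k => f ((Finset.univ.filter (fun i : Fin s => i.val < k)).image a)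
  have h := Fin.sum_univ_eq_sum_range (fun k => G (k + 1) - G k) s
  rw [Finset.sum_range_sub] at h
  simpa [G, Nat.lt_succ_iff] using h

/-- The value of any subfamily is at least `f ∅` plus the marginals of its members
over the prefixes of the whole family. -/
lemma add_sum_prefix_marginal_le
    (hf : ∀ X Y : Finset α, f (X ∪ Y) + f (X ∩ Y) ≤ f X + f Y)
    {s : ℕ} (a : Fin s → α) (ha : Function.Injective a) (T : Finset (Fin s)) :
    f ∅ + ∑ j ∈ T, (f ((Finset.univ.filter (fun i : Fin s => i ≤ j)).image a) -
      f ((Finset.univ.filter (fun i : Fin s => i < j)).image a)) ≤ f (T.image a) := by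
  -- Adding the largest index last makes the earlier part of `T` a subset of its prefix.
  induction T using Finset.induction_on_max with
  | empty => simp
  | insert j T hT ih =>
    have hj : j ∉ T := fun h => lt_irrefl _ (hT j h)
    have hpre : Finset.univ.filter (fun i : Fin s => i ≤ j) =
        insert j (Finset.univ.filter (fun i : Fin s => i < j)) := by
      ext i
      simp [le_iff_eq_or_lt]
    have hsub : T ⊆ Finset.univ.filter (fun i : Fin s => i < j) := fun i hi => by
      simpa using hT i hi
    have h := marginal_antitone hf (Finset.image_subset_image (f := a) hsub) (u := a j)
      (by simp [ha.eq_iff])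
    rw [Finset.sum_insert hj, Finset.image_insert, hpre, Finset.image_insert]
    linarith

end Submodular

/-- Deterministic form of the RandBatch property
`ε·M·Σ_{u∈L} f(u|A) ≤ OPT`: with prefix marginal gains `m_j` on `A = {a_1,…,a_s}`,
sets `P_i ⊆ A`, pairwise disjoint `E_i ⊆ N\A`, pairwise disjoint `D_i ⊆ A⁻` (given by
index sets of negative marginals), and nested `F_1 ⊇ … ⊇ F_M ⊆ N\A` with
`f(u|P_i) ≥ 0` on `F_i`, if for every `i`
`ε·Σ_{u∈F_i} f(u|P_i) ≤ Σ_{u∈E_i}(−f(u|P_i)) + Σ_{a_j∈D_i}(−m_j)`, then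
`ε·M·Σ_{u∈F_M} f(u|A) ≤ f(A⁺)`. -/
theorem stmt_5 {α : Type*} [DecidableEq α] [Fintype α]
    (f : Finset α → ℝ)
    (hf_nonneg : ∀ X : Finset α, 0 ≤ f X)
    (hf_submod : ∀ X Y : Finset α, f (X ∪ Y) + f (X ∩ Y) ≤ f X + f Y)
    (s : ℕ) (a : Fin s → α) (ha : Function.Injective a)
    (A : Finset α) (hA : A = Finset.image a Finset.univ)
    (m : Fin s → ℝ)
    (hm : ∀ j : Fin s, m j =
      f ((Finset.univ.filter (fun i : Fin s => i ≤ j)).image a) -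
      f ((Finset.univ.filter (fun i : Fin s => i < j)).image a))
    (ε : ℝ) (hε : 0 ≤ ε) (M : ℕ) (hM : 0 < M)
    (P : Fin M → Finset α) (hP : ∀ i : Fin M, P i ⊆ A)
    (E : Fin M → Finset α)
    (hE_pw : ∀ i j : Fin M, i ≠ j → Disjoint (E i) (E j))
    (hE_A : ∀ i : Fin M, Disjoint (E i) A)
    (D : Fin M → Finset (Fin s))
    (hD_pw : ∀ i j : Fin M, i ≠ j → Disjoint (D i) (D j))
    (hD_neg : ∀ i : Fin M, ∀ j ∈ D i, m j < 0)
    (F : Fin M → Finset α)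
    (hF_nested : ∀ i j : Fin M, i ≤ j → F j ⊆ F i)
    (hF_A : ∀ i : Fin M, Disjoint (F i) A)
    (hF_nonneg : ∀ i : Fin M, ∀ u ∈ F i, 0 ≤ f (insert u (P i)) - f (P i))
    (hiter : ∀ i : Fin M,
      ε * ∑ u ∈ F i, (f (insert u (P i)) - f (P i)) ≤
        (∑ u ∈ E i, (-(f (insert u (P i)) - f (P i)))) + ∑ j ∈ D i, (-(m j))) :
    ε * M * ∑ u ∈ F (⟨M - 1, Nat.sub_lt hM Nat.one_pos⟩ : Fin M),
        (f (insert u A) - f A) ≤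
      f ((Finset.univ.filter (fun j : Fin s => 0 ≤ m j)).image a) := by
  have hmono : ∀ i u, u ∉ A → f (insert u A) - f A ≤ f (insert u (P i)) - f (P i) :=
    fun i u hu => marginal_antitone hf_submod (hP i) hu
  set last : Fin M := ⟨M - 1, Nat.sub_lt hM Nat.one_pos⟩ with hlast
  have hstep : ∀ i : Fin M, ε * ∑ u ∈ F last, (f (insert u A) - f A) ≤
      (∑ u ∈ E i, (-(f (insert u A) - f A))) + ∑ j ∈ D i, (-(m j)) := by
    intro i
    have hF : ∑ u ∈ F last, (f (insert u A) - f A) ≤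
        ∑ u ∈ F i, (f (insert u (P i)) - f (P i)) :=
      (Finset.sum_le_sum fun u hu =>
        hmono i u (Finset.disjoint_left.1 (hF_A last) hu)).trans
      (Finset.sum_le_sum_of_subset_of_nonneg
        (hF_nested i last (Fin.le_def.2 (Nat.le_sub_one_of_lt i.isLt)))
        fun u hu _ => hF_nonneg i u hu)
    have hE : ∑ u ∈ E i, (-(f (insert u (P i)) - f (P i))) ≤
        ∑ u ∈ E i, (-(f (insert u A) - f A)) :=
      Finset.sum_le_sum fun u hu =>
        neg_le_neg (hmono i u (Finset.disjoint_left.1 (hE_A i) hu))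
    linarith [hiter i, mul_le_mul_of_nonneg_left hF hε]
  have hsum : ε * M * ∑ u ∈ F last, (f (insert u A) - f A) ≤
      (∑ u ∈ Finset.univ.biUnion E, (-(f (insert u A) - f A))) +
        ∑ j ∈ Finset.univ.biUnion D, (-(m j)) := by
    rw [Finset.sum_biUnion fun i _ j _ h => hE_pw i j h,
      Finset.sum_biUnion fun i _ j _ h => hD_pw i j h, ← Finset.sum_add_distrib]
    calc ε * M * ∑ u ∈ F last, (f (insert u A) - f A)
        = ∑ _i : Fin M, ε * ∑ u ∈ F last, (f (insert u A) - f A) := by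
          simp only [Finset.sum_const, Finset.card_univ, Fintype.card_fin, nsmul_eq_mul]
          ring
      _ ≤ _ := Finset.sum_le_sum fun i _ => hstep i
  have hEsum := union_sub_le_sum_marginal hf_submod A (Finset.univ.biUnion E)
    ((Finset.disjoint_biUnion_left _ _ _).2 fun i _ => hE_A i)
  have hDsum : ∑ j ∈ Finset.univ.biUnion D, (-(m j)) ≤
      ∑ j ∈ Finset.univ.filter (fun j : Fin s => ¬ 0 ≤ m j), (-(m j)) := by
    refine Finset.sum_le_sum_of_subset_of_nonneg (fun j hj => ?_) fun j hj _ => ?_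
    · obtain ⟨i, -, hi⟩ := Finset.mem_biUnion.1 hj
      simpa using hD_neg i j hi
    · have : m j < 0 := by simpa using hj
      linarith
  have htel := sum_prefix_marginal f a
  have hplus := add_sum_prefix_marginal_le hf_submod a ha
    (Finset.univ.filter (fun j : Fin s => 0 ≤ m j))
  simp only [← hm] at htel hplus
  rw [← hA] at htel
  have hsplit := Finset.sum_filter_add_sum_filter_not Finset.univ (fun j : Fin s => 0 ≤ m j) m
  rw [Finset.sum_neg_distrib] at hsum hDsum
  rw [Finset.sum_neg_distrib] at hsum hDsum
  linarith [hf_nonneg (A ∪ Finset.univ.biUnion E)]
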